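/- arXiv:1108.0810 — 2 statements merged into one kernel-verified Lean document; each statement's English description precedes it below -/
import Mathlib

section
/- Let (V, ≤) be a finite partially ordered set with n = |V| jobs, let t : V → ℝ be an injective (pairwise distinct) nonnegative processing-time function, and let σ_opt be an ordering minimizing the total completion time T among all orderings. Let K ⊆ V be an antichain (no two distinct elements of K are comparable) such that every v ∈ K has pred(v) ≠ ∅, and assume that for all v ∈ K and all x ∈ succ(K) we have σ_opt(v) < σ_opt(x). Then for every i with 1 ≤ i ≤ n, the set K ∩ σ_opt⁻¹({1, …, i}) is non-pred-exchangeable with respect to K. -/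
/-- The set of predecessors of a job: `pred(v) = {x : x < v}`. -/
def predSet {V : Type*} [PartialOrder V] (v : V) : Set V := {x | x < v}

/-- The set of successors of a job: `succ(v) = {x : v < x}`. -/
def succSet {V : Type*} [PartialOrder V] (v : V) : Set V := {x | v < x}

/-- `succ(U) = ⋃_{v ∈ U} succ(v)`. -/
def succSets {V : Type*} [PartialOrder V] (U : Set V) : Set V := ⋃ v ∈ U, succSet v

/-- `L ⊆ K` is pred-exchangeable with respect to `K` if there exists `v ∈ K \ L` such that
for every `w ∈ pred(v)` there is `u_w ∈ L ∩ succ(w)` with `t(u_w) > t(v)`. -/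
def PredExchangeable {V : Type*} [PartialOrder V] (t : V → ℝ) (K L : Set V) : Prop :=
  ∃ v ∈ K \ L, ∀ w ∈ predSet v, ∃ uw ∈ L ∩ succSet w, t uw > t v

/-- Total completion time `T(σ) = Σ_{v ∈ V} (n − σ(v) + 1) · t(v)`, where the bijection
`σ : V ≃ Fin n` gives job `v` the (1-indexed) position `(σ v : ℕ) + 1`. -/
noncomputable def TotalCost {V : Type*} [Fintype V] (n : ℕ) (t : V → ℝ)
    (σ : V ≃ Fin n) : ℝ :=
  ∑ v : V, ((n : ℝ) - ((σ v : ℕ) : ℝ)) * t v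

/-! Suppose `v ∈ K` witnesses exchangeability of a prefix of `K`, and let `w` be the predecessor of
`v` that is scheduled last. Exchangeability at `w` provides `u ∈ K`, scheduled after `w` but before
`v`, with `t u > t v`. All predecessors of `v` come no later than `w`, hence before `u`, and all
successors of `u` come after `v`, so interchanging `u` and `v` yields another ordering. It moves the
shorter job forward and is therefore cheaper, contradicting optimality. -/

section Swap

variable {V : Type*} [DecidableEq V]

theorem strictMono_comp_swap [Preorder V] {α : Type*} [Preorder α] {f : V → α} (hf : StrictMono f)
    {u v : V} (huv : f u < f v) (hpred : ∀ x < v, f x < f u) (hsucc : ∀ x, u < x → f v < f x) :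
    StrictMono (f ∘ Equiv.swap u v) := by
  intro a b hab
  have hab' : f a < f b := hf hab
  have hau : a = u → f v < f b := by rintro rfl; exact hsucc b hab
  have hbv : b = v → f a < f u := by rintro rfl; exact hpred a hab
  simp only [Function.comp_apply, Equiv.swap_apply_def]
  split_ifs <;> grind

theorem sum_comp_swap_mul_sub_sum_mul [Fintype V] {R : Type*} [NonUnitalNonAssocRing R]
    (f g : V → R) (u v : V) :
    ∑ x, f (Equiv.swap u v x) * g x - ∑ x, f x * g x = (f v - f u) * (g u - g v) := by
  obtain rfl | huv := eq_or_ne u v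
  · simp
  calc
    ∑ x, f (Equiv.swap u v x) * g x - ∑ x, f x * g x
        = ∑ x, (f (Equiv.swap u v x) - f x) * g x := by
      simp only [sub_mul, Finset.sum_sub_distrib]
    _ = (f v - f u) * g u + (f u - f v) * g v := by
      rw [Fintype.sum_eq_add u v huv fun x hx ↦ by
          rw [Equiv.swap_apply_of_ne_of_ne hx.1 hx.2, sub_self, zero_mul],
        Equiv.swap_apply_left, Equiv.swap_apply_right]
    _ = (f v - f u) * (g u - g v) := by
      rw [mul_sub, sub_eq_add_neg (_ * _), ← neg_mul, neg_sub]

theorem totalCost_swap_trans_sub_totalCost [Fintype V] {n : ℕ} (t : V → ℝ) (σ : V ≃ Fin n)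
    (u v : V) :
    TotalCost n t ((Equiv.swap u v).trans σ) - TotalCost n t σ =
      (((σ v : ℕ) : ℝ) - ((σ u : ℕ) : ℝ)) * (t v - t u) := by
  unfold TotalCost
  simp only [Equiv.trans_apply]
  rw [sum_comp_swap_mul_sub_sum_mul (fun x ↦ (n : ℝ) - ((σ x : ℕ) : ℝ)) t]
  ring

end Swap

section Optimal

variable {V : Type*} [Fintype V] {n : ℕ} {t : V → ℝ} {σopt : V ≃ Fin n}

theorem le_of_isMinOn_totalCost_of_swappable [Preorder V] (hord : StrictMono σopt)
    (hopt : IsMinOn (TotalCost n t) {σ | StrictMono σ} σopt) {u v : V} (huv : σopt u < σopt v)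
    (hpred : ∀ x < v, σopt x < σopt u) (hsucc : ∀ x, u < x → σopt v < σopt x) :
    t u ≤ t v := by
  classical
  have hswap : StrictMono ((Equiv.swap u v).trans σopt) :=
    strictMono_comp_swap hord huv hpred hsucc
  have hcost : 0 ≤ (((σopt v : ℕ) : ℝ) - ((σopt u : ℕ) : ℝ)) * (t v - t u) := by
    rw [← totalCost_swap_trans_sub_totalCost]
    exact sub_nonneg.2 (hopt hswap)
  have hpos : (0 : ℝ) < ((σopt v : ℕ) : ℝ) - ((σopt u : ℕ) : ℝ) :=
    sub_pos.2 (Nat.cast_lt.2 huv)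
  exact sub_nonneg.1 (nonneg_of_mul_nonneg_right hcost hpos)

theorem prefix_non_pred_exchangeable_general [PartialOrder V] (hord : StrictMono σopt)
    (hopt : IsMinOn (TotalCost n t) {σ | StrictMono σ} σopt) {K : Set V}
    (hpredne : ∀ v ∈ K, (predSet v).Nonempty)
    (hsucc : ∀ v ∈ K, ∀ x ∈ succSets K, σopt v < σopt x) (i : ℕ) :
    ¬ PredExchangeable t K (K ∩ {v : V | (σopt v : ℕ) + 1 ≤ i}) := by
  rintro ⟨v, ⟨hvK, hvL⟩, hex⟩
  obtain ⟨w, hwv, hlast⟩ :=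
    Set.exists_max_image (predSet v) σopt (Set.toFinite _) (hpredne v hvK)
  obtain ⟨u, ⟨⟨huK, hui⟩, hwu⟩, htvu⟩ := hex w hwv
  have hvi : ¬ (σopt v : ℕ) + 1 ≤ i := fun h ↦ hvL ⟨hvK, h⟩
  have huv : σopt u < σopt v := Nat.succ_lt_succ_iff.1 (hui.trans_lt (not_le.1 hvi))
  have hpred : ∀ x < v, σopt x < σopt u := fun x hx ↦ (hlast x hx).trans_lt (hord hwu)
  have hsuccu : ∀ x, u < x → σopt v < σopt x := fun x hx ↦
    hsucc v hvK x (Set.mem_biUnion huK hx)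
  exact htvu.not_ge (le_of_isMinOn_totalCost_of_swappable hord hopt huv hpred hsuccu)

end Optimal

/-- With `σ_opt` an optimal ordering of a SCHED instance with pairwise distinct
nonnegative processing times, `K` an antichain whose every element has a predecessor, and all
successors of `K` scheduled after all of `K`, each prefix intersection
`K ∩ σ_opt⁻¹({1, …, i})` is non-pred-exchangeable with respect to `K`. -/
theorem prefix_non_pred_exchangeable {V : Type*} [Fintype V] [PartialOrder V]
    (n : ℕ) (hn : n = Fintype.card V)
    (t : V → ℝ) (ht : Function.Injective t) (ht0 : ∀ v, 0 ≤ t v)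
    (σopt : V ≃ Fin n)
    (hord : ∀ u v : V, u < v → σopt u < σopt v)
    (hopt : ∀ σ : V ≃ Fin n, (∀ u v : V, u < v → σ u < σ v) →
      TotalCost n t σopt ≤ TotalCost n t σ)
    (K : Set V) (hK : IsAntichain (· ≤ ·) K)
    (hpredne : ∀ v ∈ K, (predSet v).Nonempty)
    (hsucc : ∀ v ∈ K, ∀ x ∈ succSets K, (σopt v : ℕ) < (σopt x : ℕ))
    (i : ℕ) (hi1 : 1 ≤ i) (hin : i ≤ n) :
    ¬ PredExchangeable t K (K ∩ {v : V | (σopt v : ℕ) + 1 ≤ i}) := by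
  exact prefix_non_pred_exchangeable_general (fun u v ↦ hord u v)
    (fun σ hσ ↦ hopt σ fun _ _ h ↦ hσ h) hpredne hsucc i
end

section
/- Let (V, ≤) be a finite partially ordered set, t : V → ℝ injective, M ⊆ V, and K ⊆ V with succ(K) ⊆ M. With f and g the succ-encoding and succ-decoding maps defined below, if a subset Y ⊆ K does not satisfy Y ⊆ g(f(Y)), then Y is succ-exchangeable with respect to K. Consequently, every non-succ-exchangeable subset Y ⊆ K satisfies g(f(Y)) = Y. -/
/-- `L ⊆ K` is succ-exchangeable with respect to `K` if there exists `u ∈ L` such that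
for every `w ∈ succ(u)` there is `v_w ∈ (K ∩ pred(w)) \ L` with `t(v_w) < t(u)`. -/
def SuccExchangeable {V : Type*} [PartialOrder V] (t : V → ℝ) (K L : Set V) : Prop :=
  ∃ u ∈ L, ∀ w ∈ succSet u, ∃ vw ∈ (K ∩ predSet w) \ L, t vw < t u

/-- The succ-encoding map: `f(Y)` is the set of "least expensive predecessors outside `Y`",
i.e. all `v` that, for some `w ∈ M`, are the element of `(K \ Y) ∩ pred(w)` with smallest
processing time (the value `nil`, taken when this set is empty, contributes no element). -/
def succEncode {V : Type*} [PartialOrder V] (t : V → ℝ) (M K Y : Set V) : Set V :=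
  {v | ∃ w ∈ M, v ∈ (K \ Y) ∩ predSet w ∧ ∀ z ∈ (K \ Y) ∩ predSet w, t v ≤ t z}

/-- The succ-decoding map: `g(Z)` is the set of `v ∈ K` for which there is `w ∈ succ(v)`
such that every `z ∈ Z ∩ pred(w)` satisfies `t(z) > t(v)`. -/
def succDecode {V : Type*} [PartialOrder V] (t : V → ℝ) (K Z : Set V) : Set V :=
  {v | v ∈ K ∧ ∃ w ∈ succSet v, ∀ z ∈ Z ∩ predSet w, t v < t z}

/-!
The encoding `f(Y)` keeps only the cheapest element of each `(K \ Y) ∩ pred(w)`, and this is all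
that decoding looks at: a strict lower bound on `t` over `(K \ Y) ∩ pred(w)` need only be tested at
the minimum, so `g(f(Y)) = g(K \ Y)`. The set `g(K \ Y)` never leaves `Y`, since `v ∈ K \ Y` cannot
be strictly cheaper than itself. For injective `t`, an element of `Y` is missing from `g(K \ Y)`
exactly when each of its successors has a cheaper predecessor in `K \ Y`, that is, when the element
witnesses that `Y` is succ-exchangeable.
-/

section SuccEncodeDecode

variable {V : Type*} [PartialOrder V] {t : V → ℝ} {M K Y : Set V}

theorem succDecode_antitone (t : V → ℝ) (K : Set V) : Antitone (succDecode t K) :=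
  fun _ _ hZ _ ⟨hvK, w, hw, hlt⟩ => ⟨hvK, w, hw, fun z hz => hlt z ⟨hZ hz.1, hz.2⟩⟩

theorem succEncode_subset_sdiff (t : V → ℝ) (M K Y : Set V) : succEncode t M K Y ⊆ K \ Y :=
  fun _ ⟨_, _, hv, _⟩ => hv.1

theorem succDecode_sdiff_subset (t : V → ℝ) (K Y : Set V) : succDecode t K (K \ Y) ⊆ Y := by
  rintro v ⟨hvK, w, hw, hlt⟩
  by_contra hvY
  exact lt_irrefl (t v) (hlt v ⟨⟨hvK, hvY⟩, hw⟩)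

theorem exists_mem_succEncode_le {w z : V} (hwf : (t '' (K ∩ predSet w)).IsWF) (hw : w ∈ M)
    (hz : z ∈ (K \ Y) ∩ predSet w) : ∃ m ∈ succEncode t M K Y ∩ predSet w, t m ≤ t z := by
  have hwf' : (t '' ((K \ Y) ∩ predSet w)).IsWF :=
    hwf.mono (Set.image_mono (Set.inter_subset_inter_left _ Set.sdiff_subset))
  obtain ⟨m, hm, hmin⟩ := hwf'.min_mem ⟨t z, Set.mem_image_of_mem t hz⟩
  have hle : ∀ x ∈ (K \ Y) ∩ predSet w, t m ≤ t x := fun x hx =>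
    hmin.trans_le (hwf'.min_le _ (Set.mem_image_of_mem t hx))
  exact ⟨m, ⟨⟨w, hw, hm, hle⟩, hm.2⟩, hle z hz⟩

theorem succDecode_succEncode (hwf : ∀ w ∈ M, (t '' (K ∩ predSet w)).IsWF)
    (hKM : succSets K ⊆ M) (Y : Set V) :
    succDecode t K (succEncode t M K Y) = succDecode t K (K \ Y) := by
  refine Set.Subset.antisymm ?_ (succDecode_antitone t K (succEncode_subset_sdiff t M K Y))
  rintro v ⟨hvK, w, hvw, hlt⟩
  have hwM : w ∈ M := hKM (Set.mem_biUnion hvK hvw)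
  refine ⟨hvK, w, hvw, fun z hz => ?_⟩
  obtain ⟨m, hm, hmz⟩ := exists_mem_succEncode_le (hwf w hwM) hwM hz
  exact (hlt m hm).trans_le hmz

theorem not_succExchangeable_iff :
    ¬ SuccExchangeable t K Y ↔
      ∀ u ∈ Y, ∃ w ∈ succSet u, ∀ z ∈ (K \ Y) ∩ predSet w, t u ≤ t z := by
  simp only [SuccExchangeable, Set.inter_sdiff_right_comm]
  push Not
  rfl

theorem subset_succDecode_sdiff_iff (ht : Set.InjOn t K) (hY : Y ⊆ K) :
    Y ⊆ succDecode t K (K \ Y) ↔ ¬ SuccExchangeable t K Y := by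
  rw [not_succExchangeable_iff]
  constructor
  · intro h u hu
    obtain ⟨-, w, hw, hlt⟩ := h hu
    exact ⟨w, hw, fun z hz => (hlt z hz).le⟩
  · intro h u hu
    obtain ⟨w, hw, hle⟩ := h u hu
    refine ⟨hY hu, w, hw, fun z hz => (hle z hz).lt_of_ne fun htuz => hz.1.2 ?_⟩
    exact ht (hY hu) hz.1.1 htuz ▸ hu

theorem subset_succDecode_succEncode (ht : Set.InjOn t K) (M : Set V) (hY : Y ⊆ K)
    (h : ¬ SuccExchangeable t K Y) : Y ⊆ succDecode t K (succEncode t M K Y) :=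
  ((subset_succDecode_sdiff_iff ht hY).mpr h).trans
    (succDecode_antitone t K (succEncode_subset_sdiff t M K Y))

theorem succEncode_decode_fixed_point_general (ht : Set.InjOn t K)
    (hwf : ∀ w ∈ M, (t '' (K ∩ predSet w)).IsWF) (hKM : succSets K ⊆ M) (hY : Y ⊆ K) :
    succDecode t K (succEncode t M K Y) = Y ↔ ¬ SuccExchangeable t K Y := by
  rw [succDecode_succEncode hwf hKM, ← subset_succDecode_sdiff_iff ht hY]
  exact (succDecode_sdiff_subset t K Y).ge_iff_eq.symm

end SuccEncodeDecode

/-- For `K ⊆ V` with `succ(K) ⊆ M` and injective processing times: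
if `Y ⊆ K` does not satisfy `Y ⊆ g(f(Y))`, then `Y` is succ-exchangeable with respect
to `K`; consequently every non-succ-exchangeable `Y ⊆ K` satisfies `g(f(Y)) = Y`. -/
theorem succEncode_decode_fixed_point {V : Type*} [Fintype V] [PartialOrder V]
    (t : V → ℝ) (ht : Function.Injective t)
    (M K : Set V) (hKM : succSets K ⊆ M)
    (Y : Set V) (hY : Y ⊆ K) :
    (¬ Y ⊆ succDecode t K (succEncode t M K Y) → SuccExchangeable t K Y)
    ∧ (¬ SuccExchangeable t K Y → succDecode t K (succEncode t M K Y) = Y) :=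
  ⟨not_imp_comm.mp (subset_succDecode_succEncode ht.injOn M hY),
    (succEncode_decode_fixed_point_general ht.injOn (fun _ _ => (Set.toFinite _).isWF) hKM hY).mpr⟩
end
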